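/- If p − q ≡ 1 (mod 4), then Cl_{p,q} is a semisimple ℝ-algebra of dimension 2^{p+q} isomorphic to Mat(2^{k−1}, 𝕂) ⊕ Mat(2^{k−1}, 𝕂) with k = q − r_{q−p}, where 𝕂 = ℝ if p − q ≡ 1 (mod 8) and 𝕂 = ℍ if p − q ≡ 5 (mod 8); moreover the two simple direct summands are projected out by the two central idempotents (1 ± e_1 e_2 ⋯ e_{p+q})/2. -/

import Mathlib

noncomputable section

/-- The quadratic form of signature `(p,q)` on `ℝ^(p+q)`. -/
def Qpq (p q : ℕ) : QuadraticForm ℝ (Fin (p + q) → ℝ) :=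
  QuadraticMap.weightedSumSquares ℝ (fun i : Fin (p + q) => if (i : ℕ) < p then (1 : ℝ) else -1)

/-- The real Clifford algebra `Cl_{p,q}`. -/
abbrev Cl (p q : ℕ) : Type := CliffordAlgebra (Qpq p q)

/-- The generators `e i` of `Cl_{p,q}`. -/
def gen (p q : ℕ) (i : Fin (p + q)) : Cl p q :=
  CliffordAlgebra.ι (Qpq p q) (Pi.single i 1)

/-- The unit pseudoscalar `β = e₁e₂⋯e_n` of `Cl_{p,q}`. -/
def pseudoScalar (p q : ℕ) : Cl p q := (List.ofFn (gen p q)).prod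

/-- The values of the Radon–Hurwitz numbers `r_0,…,r_7`. -/
def rhBase : ℕ → ℤ
  | 0 => 0
  | 1 => 1
  | 2 => 2
  | 3 => 2
  | _ => 3

/-- The Radon–Hurwitz number `r_i` (`r_0 = 0`, `r_1 = 1`, `r_2 = r_3 = 2`,
`r_4 = r_5 = r_6 = r_7 = 3`), extended to all integers by `r_{i+8} = r_i + 4`. -/
def radonHurwitz (i : ℤ) : ℤ := 4 * ((i - i % 8) / 8) + rhBase (i % 8).toNat

/-!
An `ℝ`-algebra generated by anticommuting elements, `p` of square `1` and `q` of square `-1`, is a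
quotient of `Cl p q`. Two constructions produce such algebras. Passing from `A` to `2 × 2` matrices
over `A` adjoins one generator of each sign. Multiplying each of four generators of equal sign by
the product of all four flips their signs and generates the same algebra. Starting from `ℝ`, of
signature `(1, 0)`, or `ℍ`, of signature `(0, 3)`, they show that a full matrix algebra over `ℝ` or
`ℍ` of half the dimension of `Cl p q` is a quotient of it.

The pseudoscalar is central of square `1`, hence acts on this central quotient as `1` or `-1`. Since
`p + q` is odd, the grade involution negates the pseudoscalar, so there are two quotient maps, on
which it takes the values `1` and `-1`. Together they map onto the product of two copies of the
matrix algebra, and this map is an isomorphism because the dimensions agree.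
-/

theorem exists_equiv_comp_eq_of_map_univ_eq {ι κ α : Type*} [Fintype ι] [Fintype κ] {s : ι → α}
    {t : κ → α} (h : Finset.univ.val.map s = Finset.univ.val.map t) :
    ∃ σ : κ ≃ ι, s ∘ σ = t := by
  classical
  have card_fiber (a : α) : Fintype.card {j // t j = a} = Fintype.card {i // s i = a} := by
    simpa [Multiset.count_map, Fintype.card_subtype, eq_comm, Finset.card_def] using
      (congrArg (Multiset.count a) h).symm
  exact ⟨Equiv.ofFiberEquiv fun a => Fintype.equivOfCardEq (card_fiber a),
    funext fun j => Equiv.ofFiberEquiv_map _ j⟩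

section AnticommutingProducts

variable {A : Type*} [Ring A] {l : List A} {a : A}

theorem mul_list_prod_of_forall_anticomm (h : ∀ b ∈ l, a * b = -(b * a)) :
    a * l.prod = (-1 : ℤ) ^ l.length • (l.prod * a) := by
  induction l with
  | nil => simp
  | cons b l ih =>
    rw [List.forall_mem_cons] at h
    rw [List.prod_cons, ← mul_assoc, h.1, neg_mul, mul_assoc, ih h.2, List.length_cons, pow_succ,
      mul_neg_one, neg_smul, mul_smul_comm, mul_assoc]

/- Commuting `a` past the product meets `a` itself once, whence the extra sign. -/
theorem mul_list_prod_of_pairwise_anticomm (h : l.Pairwise fun b c => b * c = -(c * b))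
    (ha : a ∈ l) : a * l.prod = -((-1 : ℤ) ^ l.length • (l.prod * a)) := by
  obtain ⟨l₁, l₂, rfl⟩ := List.append_of_mem ha
  obtain ⟨-, h₂, h₁₂⟩ := List.pairwise_append.1 h
  have left : a * l₁.prod = (-1 : ℤ) ^ l₁.length • (l₁.prod * a) :=
    mul_list_prod_of_forall_anticomm fun b hb => by
      rw [h₁₂ b hb a List.mem_cons_self, neg_neg]
  have right : a * l₂.prod = (-1 : ℤ) ^ l₂.length • (l₂.prod * a) :=
    mul_list_prod_of_forall_anticomm (List.pairwise_cons.1 h₂).1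
  calc a * (l₁ ++ a :: l₂).prod = a * l₁.prod * (a * l₂.prod) := by simp [mul_assoc]
    _ = (-1 : ℤ) ^ l₁.length • (l₁.prod * a * (a * l₂.prod)) := by rw [left, smul_mul_assoc]
    _ = (-1 : ℤ) ^ l₁.length • (-1 : ℤ) ^ l₂.length • (l₁.prod * a * l₂.prod * a) := by
      rw [right, mul_smul_comm]
      simp only [mul_assoc]
    _ = -((-1 : ℤ) ^ (l₁ ++ a :: l₂).length • ((l₁ ++ a :: l₂).prod * a)) := by
      simp [pow_add, pow_succ, mul_smul, mul_assoc]

end AnticommutingProducts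

theorem mem_center_of_adjoin_eq_top {R A : Type*} [CommSemiring R] [Semiring A] [Algebra R A]
    {S : Set A} (hS : Algebra.adjoin R S = ⊤) {z : A} (hz : ∀ x ∈ S, x * z = z * x) :
    z ∈ Subalgebra.center R A := by
  have adjoin_le : Algebra.adjoin R S ≤ Subalgebra.centralizer R {z} :=
    Algebra.adjoin_le fun x hx =>
      (Subalgebra.mem_centralizer_iff R).2 fun _ hy => by rw [Set.mem_singleton_iff.1 hy, hz x hx]
  refine Subalgebra.mem_center_iff.2 fun x => ?_
  have hx : x ∈ Algebra.adjoin R S := hS ▸ Algebra.mem_top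
  exact ((Subalgebra.mem_centralizer_iff R).1 (adjoin_le hx) z rfl).symm

/-- The family `e` satisfies the defining relations of the generators of the Clifford algebra of the
diagonal quadratic form `∑ i, s i * x i ^ 2`. -/
structure IsCliffordFamily {R A ι : Type*} [CommRing R] [Ring A] [Algebra R A] (s : ι → R)
    (e : ι → A) : Prop where
  sq (i : ι) : e i * e i = algebraMap R A (s i)
  anticomm (i j : ι) (hij : i ≠ j) : e i * e j = -(e j * e i)

namespace IsCliffordFamily

variable {R A B ι κ : Type*} [CommRing R] [Ring A] [Algebra R A] [Ring B] [Algebra R B]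

theorem comp {s : ι → R} {e : ι → A} (h : IsCliffordFamily s e) {σ : κ → ι}
    (hσ : σ.Injective) : IsCliffordFamily (s ∘ σ) (e ∘ σ) where
  sq i := h.sq (σ i)
  anticomm i j hij := h.anticomm (σ i) (σ j) (hσ.ne hij)

theorem map {s : ι → R} {e : ι → A} (h : IsCliffordFamily s e) (f : A →ₐ[R] B) :
    IsCliffordFamily s (f ∘ e) where
  sq i := by simp [← map_mul, h.sq]
  anticomm i j hij := by simp [← map_mul, h.anticomm i j hij]

theorem sumElim {s : ι → R} {t : κ → R} {e : ι → A} {a : κ → A} (he : IsCliffordFamily s e)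
    (ha : IsCliffordFamily t a) (hea : ∀ i j, e i * a j = -(a j * e i)) :
    IsCliffordFamily (Sum.elim s t) (Sum.elim e a) where
  sq := Sum.rec he.sq ha.sq
  anticomm := by
    rintro (i | i) (j | j) hij
    · exact he.anticomm i j (by simpa using hij)
    · exact hea i j
    · simp [hea]
    · exact ha.anticomm i j (by simpa using hij)

section Product

variable {n : ℕ} {s : Fin n → R} {e : Fin n → A}

theorem pairwise_ofFn (h : IsCliffordFamily s e) :
    (List.ofFn e).Pairwise fun a b => a * b = -(b * a) :=
  List.pairwise_ofFn.2 fun i j hij => h.anticomm i j hij.ne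

theorem mul_prod (h : IsCliffordFamily s e) (i : Fin n) :
    e i * (List.ofFn e).prod = -((-1 : ℤ) ^ n • ((List.ofFn e).prod * e i)) := by
  simpa using mul_list_prod_of_pairwise_anticomm h.pairwise_ofFn (List.mem_ofFn.2 ⟨i, rfl⟩)

theorem prod_mul_prod (h : IsCliffordFamily s e) :
    (List.ofFn e).prod * (List.ofFn e).prod =
      algebraMap R A ((-1) ^ n.choose 2 * ∏ i, s i) := by
  induction n with
  | zero => simp
  | succ n ih =>
    have ih := ih (h.comp (Fin.succ_injective n))
    have swap : e 0 * (List.ofFn (e ∘ Fin.succ)).prod =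
        (-1 : ℤ) ^ n • ((List.ofFn (e ∘ Fin.succ)).prod * e 0) := by
      simpa using mul_list_prod_of_forall_anticomm (l := List.ofFn (e ∘ Fin.succ))
        (List.forall_mem_ofFn_iff.2 fun i => h.anticomm 0 i.succ (Fin.succ_ne_zero i).symm)
    rw [List.ofFn_succ, List.prod_cons, Fin.prod_univ_succ, Nat.choose_succ_succ' n 1,
      Nat.choose_one_right]
    change e 0 * (List.ofFn (e ∘ Fin.succ)).prod * (e 0 * (List.ofFn (e ∘ Fin.succ)).prod) = _
    set P := (List.ofFn (e ∘ Fin.succ)).prod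
    calc e 0 * P * (e 0 * P) = e 0 * P * ((-1 : ℤ) ^ n • (P * e 0)) := by rw [swap]
      _ = (-1 : ℤ) ^ n • (e 0 * (P * P) * e 0) := by simp only [mul_smul_comm, mul_assoc]
      _ = (-1 : ℤ) ^ n • (P * P * (e 0 * e 0)) := by
        rw [ih, ← Algebra.commutes, mul_assoc]
      _ = _ := by
        rw [ih, h.sq, ← Int.cast_smul_eq_zsmul R, Algebra.smul_def, ← map_mul, ← map_mul]
        congr 1
        push_cast [Function.comp_apply]
        ring

theorem prod_mem_center (h : IsCliffordFamily s e) (hgen : Algebra.adjoin R (Set.range e) = ⊤)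
    (hn : Odd n) : (List.ofFn e).prod ∈ Subalgebra.center R A := by
  refine mem_center_of_adjoin_eq_top hgen ?_
  rintro _ ⟨i, rfl⟩
  simpa [hn.neg_one_pow] using h.mul_prod i

end Product

section FourProduct

variable {t : Fin 4 → R} {a : Fin 4 → A}

theorem prod_mul_prod_eq_one (h : IsCliffordFamily t a) (ht : ∏ i, t i = 1) :
    (List.ofFn a).prod * (List.ofFn a).prod = 1 := by
  rw [h.prod_mul_prod, ht, mul_one, show Nat.choose 4 2 = 6 from rfl, Even.neg_one_pow ⟨3, rfl⟩,
    map_one]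

theorem mul_prod_mul_mul_prod (h : IsCliffordFamily t a) (ht : ∏ i, t i = 1) (i j : Fin 4) :
    a i * (List.ofFn a).prod * (a j * (List.ofFn a).prod) = -(a i * a j) := by
  rw [h.mul_prod j, Even.neg_one_pow ⟨2, rfl⟩, one_smul, mul_assoc, mul_neg, ← mul_assoc _ _ (a j),
    h.prod_mul_prod_eq_one ht, one_mul, mul_neg]

theorem mul_prod_of_prod_eq_one (h : IsCliffordFamily t a) (ht : ∏ i, t i = 1) :
    IsCliffordFamily (-t) fun i => a i * (List.ofFn a).prod where
  sq i := by rw [h.mul_prod_mul_mul_prod ht, h.sq, Pi.neg_apply, map_neg]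
  anticomm i j hij := by simp only [h.mul_prod_mul_mul_prod ht, h.anticomm i j hij]

theorem sumElim_mul_prod {s : ι → R} {e : ι → A}
    (h : IsCliffordFamily (Sum.elim s t) (Sum.elim e a)) (ht : ∏ i, t i = 1) :
    IsCliffordFamily (Sum.elim s (-t)) (Sum.elim e fun i => a i * (List.ofFn a).prod) := by
  have he : IsCliffordFamily s e := h.comp Sum.inl_injective
  have ha : IsCliffordFamily t a := h.comp Sum.inr_injective
  have hea (i : ι) (j : Fin 4) : e i * a j = -(a j * e i) :=
    h.anticomm (.inl i) (.inr j) Sum.inl_ne_inr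
  refine he.sumElim (ha.mul_prod_of_prod_eq_one ht) fun i j => ?_
  have commute_prod : e i * (List.ofFn a).prod = (List.ofFn a).prod * e i := by
    simpa using mul_list_prod_of_forall_anticomm (List.forall_mem_ofFn_iff.2 (hea i))
  rw [← mul_assoc, hea, neg_mul, mul_assoc, commute_prod, mul_assoc]

theorem prod_ofFn_mul_prod (h : IsCliffordFamily t a) (ht : ∏ i, t i = 1) :
    (List.ofFn fun i => a i * (List.ofFn a).prod).prod = (List.ofFn a).prod := by
  set P := (List.ofFn a).prod with hP
  calc (List.ofFn fun i => a i * P).prod = (a 0 * P * (a 1 * P)) * (a 2 * P * (a 3 * P)) := by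
        simp [List.ofFn_succ, mul_assoc]
    _ = a 0 * a 1 * (a 2 * a 3) := by
        rw [h.mul_prod_mul_mul_prod ht, h.mul_prod_mul_mul_prod ht, neg_mul_neg]
    _ = P := by simp [hP, List.ofFn_succ, mul_assoc]

theorem mem_adjoin_range_mul_prod (h : IsCliffordFamily t a) (ht : ∏ i, t i = 1) (i : Fin 4) :
    a i ∈ Algebra.adjoin R (Set.range fun j => a j * (List.ofFn a).prod) := by
  have mem_adjoin (j : Fin 4) := Algebra.subset_adjoin (R := R)
    (Set.mem_range_self (f := fun j => a j * (List.ofFn a).prod) j)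
  have prod_mem := list_prod_mem (List.forall_mem_ofFn_iff.2 mem_adjoin)
  have a_eq : a i = a i * (List.ofFn a).prod *
      (List.ofFn fun j => a j * (List.ofFn a).prod).prod := by
    rw [h.prod_ofFn_mul_prod ht, mul_assoc, h.prod_mul_prod_eq_one ht, mul_one]
  rw [a_eq]
  exact mul_mem (mem_adjoin i) prod_mem

end FourProduct

end IsCliffordFamily

/-- `A` is generated by a finite Clifford family whose squares, listed with multiplicity, are `w`.
The order of the generators is forgotten, so that signatures can be manipulated as multisets. -/
def HasCliffordGenerators {R : Type*} [CommRing R] (w : Multiset R) (A : Type*) [Ring A]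
    [Algebra R A] : Prop :=
  ∃ (n : ℕ) (s : Fin n → R) (e : Fin n → A),
    Finset.univ.val.map s = w ∧ IsCliffordFamily s e ∧ Algebra.adjoin R (Set.range e) = ⊤

theorem hasCliffordGenerators_map_univ_iff {R A ι : Type*} [CommRing R] [Ring A] [Algebra R A]
    [Fintype ι] {s : ι → R} :
    HasCliffordGenerators (Finset.univ.val.map s) A ↔
      ∃ e : ι → A, IsCliffordFamily s e ∧ Algebra.adjoin R (Set.range e) = ⊤ := by
  constructor
  · rintro ⟨n, t, e, hts, he, hgen⟩
    obtain ⟨σ, rfl⟩ := exists_equiv_comp_eq_of_map_univ_eq hts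
    exact ⟨e ∘ σ, he.comp σ.injective, by rwa [σ.surjective.range_comp]⟩
  · rintro ⟨e, he, hgen⟩
    let σ := (Fintype.equivFin ι).symm
    refine ⟨Fintype.card ι, s ∘ σ, e ∘ σ, ?_, he.comp σ.injective, by
      rwa [σ.surjective.range_comp]⟩
    rw [← Multiset.map_map, Multiset.map_univ_val_equiv]

theorem exists_map_univ_eq {α : Type*} (w : Multiset α) :
    ∃ (n : ℕ) (s : Fin n → α), Finset.univ.val.map s = w :=
  Quot.inductionOn w fun l => ⟨l.length, l.get, by simp [Fin.univ_val_map]⟩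

theorem map_univ_sumElim {ι κ α : Type*} [Fintype ι] [Fintype κ] (s : ι → α) (t : κ → α) :
    Finset.univ.val.map (Sum.elim s t) = Finset.univ.val.map s + Finset.univ.val.map t := by
  simp [← Finset.univ_disjSum_univ, Multiset.map_disjSum]

theorem map_univ_fin_const {α : Type*} (n : ℕ) (a : α) :
    Finset.univ.val.map (fun _ : Fin n => a) = Multiset.replicate n a := by
  simp

/-- The multiset of diagonal entries of the quadratic form of signature `(p, q)`. -/
def signature (R : Type*) [CommRing R] (p q : ℕ) : Multiset R :=
  Multiset.replicate p 1 + Multiset.replicate q (-1)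

theorem signature_succ_succ {R : Type*} [CommRing R] (p q : ℕ) :
    signature R (p + 1) (q + 1) = signature R p q + {1, -1} := by
  rw [signature, Multiset.replicate_add, Multiset.replicate_add, add_add_add_comm]
  rfl

namespace HasCliffordGenerators

variable {R A B : Type*} [CommRing R] [Ring A] [Algebra R A] [Ring B] [Algebra R B]

theorem of_surjective {w : Multiset R} (h : HasCliffordGenerators w A) (f : A →ₐ[R] B)
    (hf : Function.Surjective f) : HasCliffordGenerators w B := by
  obtain ⟨n, s, e, hs, he, hgen⟩ := h
  refine ⟨n, s, f ∘ e, hs, he.map f, ?_⟩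
  rw [Set.range_comp, ← AlgHom.map_adjoin, hgen, Algebra.map_top, AlgHom.range_eq_top]
  exact hf

theorem replicate_four_neg {w : Multiset R} {ε : R} (hε : ε ^ 2 = 1)
    (h : HasCliffordGenerators (w + Multiset.replicate 4 ε) A) :
    HasCliffordGenerators (w + Multiset.replicate 4 (-ε)) A := by
  obtain ⟨n, s, rfl⟩ := exists_map_univ_eq w
  rw [← map_univ_fin_const, ← map_univ_sumElim, hasCliffordGenerators_map_univ_iff] at h ⊢
  obtain ⟨e, he, hgen⟩ := h
  obtain ⟨e, a, rfl⟩ : ∃ e₁ e₂, e = Sum.elim e₁ e₂ := ⟨_, _, (Sum.elim_comp_inl_inr e).symm⟩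
  have prod_eq : ∏ _i : Fin 4, ε = 1 := by simp [show ε ^ 4 = (ε ^ 2) ^ 2 by ring, hε]
  refine ⟨_, he.sumElim_mul_prod prod_eq, ?_⟩
  rw [eq_top_iff, ← hgen, Algebra.adjoin_le_iff, Set.Sum.elim_range, Set.Sum.elim_range,
    Set.union_subset_iff]
  refine ⟨Set.subset_union_left.trans Algebra.subset_adjoin, ?_⟩
  rintro _ ⟨i, rfl⟩
  exact Algebra.adjoin_mono Set.subset_union_right
    ((he.comp Sum.inr_injective).mem_adjoin_range_mul_prod prod_eq i)

theorem replicate_four_mul_neg {w : Multiset R} {ε : R} (hε : ε ^ 2 = 1) {m : ℕ}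
    (h : HasCliffordGenerators (w + Multiset.replicate (4 * m) ε) A) :
    HasCliffordGenerators (w + Multiset.replicate (4 * m) (-ε)) A := by
  induction m generalizing w with
  | zero => simpa using h
  | succ m ih =>
    rw [mul_add_one, Multiset.replicate_add, ← add_assoc] at h ⊢
    have h := h.replicate_four_neg hε
    rw [add_right_comm] at h ⊢
    exact ih h

theorem signature_add_four_mul_iff {p q m : ℕ} :
    HasCliffordGenerators (signature R (p + 4 * m) q) A ↔
      HasCliffordGenerators (signature R p (q + 4 * m)) A := by
  have left_eq : signature R (p + 4 * m) q = signature R p q + Multiset.replicate (4 * m) 1 := by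
    rw [signature, Multiset.replicate_add, add_right_comm, signature]
  have right_eq : signature R p (q + 4 * m) =
      signature R p q + Multiset.replicate (4 * m) (-1) := by
    rw [signature, Multiset.replicate_add, ← add_assoc, signature]
  rw [left_eq, right_eq]
  exact ⟨replicate_four_mul_neg (one_pow 2), fun h => by
    simpa using h.replicate_four_mul_neg neg_one_sq⟩

theorem signature_of_modEq {a b p q : ℕ} (h : HasCliffordGenerators (signature R a b) A)
    (hadd : p + q = a + b) (hmod : p ≡ a [MOD 4]) :
    HasCliffordGenerators (signature R p q) A := by
  rcases le_total p a with hpa | hap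
  · obtain ⟨m, hm⟩ := (Nat.modEq_iff_dvd' hpa).1 hmod
    obtain ⟨rfl, rfl⟩ : a = p + 4 * m ∧ q = b + 4 * m := by lia
    exact signature_add_four_mul_iff.1 h
  · obtain ⟨m, hm⟩ := (Nat.modEq_iff_dvd' hap).1 hmod.symm
    obtain ⟨rfl, rfl⟩ : p = a + 4 * m ∧ b = q + 4 * m := by lia
    exact signature_add_four_mul_iff.2 h

end HasCliffordGenerators

section MatrixStep

variable {R A ι n : Type*} [CommRing R] [Ring A] [Algebra R A]

theorem subalgebra_matrix_eq_top [Fintype n] [DecidableEq n] {T : Set A}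
    (hT : Algebra.adjoin R T = ⊤) {S : Subalgebra R (Matrix n n A)}
    (single_mem : ∀ i j, Matrix.single i j 1 ∈ S) (scalar_mem : ∀ a ∈ T, Matrix.scalar n a ∈ S) :
    S = ⊤ := by
  have scalar_mem (a : A) : Matrix.scalar n a ∈ S := by
    have top_le : ⊤ ≤ S.comap (Matrix.scalarAlgHom n R) := hT ▸ Algebra.adjoin_le scalar_mem
    exact top_le Algebra.mem_top
  refine eq_top_iff.2 fun M _ => ?_
  rw [Matrix.matrix_eq_sum_single M]
  refine sum_mem fun i _ => sum_mem fun j _ => ?_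
  simpa [← Matrix.smul_eq_diagonal_mul] using mul_mem (scalar_mem (M i j)) (single_mem i j)

theorem subalgebra_matrix_fin_two_eq_top [Invertible (2 : R)] {T : Set A}
    (hT : Algebra.adjoin R T = ⊤) {S : Subalgebra R (Matrix (Fin 2) (Fin 2) A)}
    (swap_mem : !![0, 1; 1, 0] ∈ S) (rot_mem : !![0, -1; 1, 0] ∈ S)
    (diag_mem : ∀ a ∈ T, !![a, 0; 0, -a] ∈ S) : S = ⊤ := by
  have sign_mem : !![1, 0; 0, -1] ∈ S := by simpa using mul_mem swap_mem rot_mem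
  have idem_mem : !![1, 0; 0, 0] ∈ S := by
    have half_eq : !![1, 0; 0, 0] = (⅟2 : R) • (1 + !![(1 : A), 0; 0, -1]) := by
      ext i j
      fin_cases i <;> fin_cases j <;> simp [← two_smul R]
    rw [half_eq]
    exact S.smul_mem (add_mem (one_mem S) sign_mem) _
  refine subalgebra_matrix_eq_top hT (fun i j => ?_) fun a ha => ?_
  · have single_eq : (Matrix.single i j 1 : Matrix (Fin 2) (Fin 2) A) =
        !![0, 1; 1, 0] ^ (i : ℕ) * !![1, 0; 0, 0] * !![0, 1; 1, 0] ^ (j : ℕ) := by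
      ext k l
      fin_cases i <;> fin_cases j <;> fin_cases k <;> fin_cases l <;> simp
    rw [single_eq]
    exact mul_mem (mul_mem (pow_mem swap_mem _) idem_mem) (pow_mem swap_mem _)
  · have scalar_eq : Matrix.scalar (Fin 2) a = !![a, 0; 0, -a] * !![1, 0; 0, -1] := by
      ext k l
      fin_cases k <;> fin_cases l <;> simp
    rw [scalar_eq]
    exact mul_mem (diag_mem a ha) sign_mem

namespace IsCliffordFamily

theorem matrix_diag {s : ι → R} {e : ι → A} (h : IsCliffordFamily s e) :
    IsCliffordFamily s fun i => !![e i, 0; 0, -e i] where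
  sq i := by
    ext i j
    fin_cases i <;> fin_cases j <;> simp [h.sq, Matrix.algebraMap_eq_diagonal]
  anticomm i j hij := by simp [h.anticomm i j hij]

theorem matrix_hyperbolic :
    IsCliffordFamily ![(1 : R), -1] ![!![(0 : A), 1; 1, 0], !![0, -1; 1, 0]] where
  sq i := by
    fin_cases i <;> simp [Matrix.one_fin_two]
  anticomm i j hij := by
    fin_cases i <;> fin_cases j <;> simp at hij ⊢

end IsCliffordFamily

theorem HasCliffordGenerators.matrix_fin_two [Invertible (2 : R)] {w : Multiset R}
    (h : HasCliffordGenerators w A) :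
    HasCliffordGenerators (w + {1, -1}) (Matrix (Fin 2) (Fin 2) A) := by
  obtain ⟨n, s, e, rfl, he, hgen⟩ := h
  have pair_eq : ({1, -1} : Multiset R) = Finset.univ.val.map ![1, -1] := rfl
  rw [pair_eq, ← map_univ_sumElim, hasCliffordGenerators_map_univ_iff]
  refine ⟨_, he.matrix_diag.sumElim .matrix_hyperbolic fun i j => ?_, ?_⟩
  · fin_cases j <;> simp
  · refine subalgebra_matrix_fin_two_eq_top hgen ?_ ?_ ?_
    · exact Algebra.subset_adjoin ⟨.inr 0, rfl⟩
    · exact Algebra.subset_adjoin ⟨.inr 1, rfl⟩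
    · rintro _ ⟨i, rfl⟩
      exact Algebra.subset_adjoin ⟨.inl i, rfl⟩

theorem HasCliffordGenerators.matrix_two_pow [Invertible (2 : R)] {p q : ℕ}
    (h : HasCliffordGenerators (signature R p q) A) (n : ℕ) :
    HasCliffordGenerators (signature R (p + n) (q + n)) (Matrix (Fin (2 ^ n)) (Fin (2 ^ n)) A) := by
  induction n with
  | zero =>
    have : Subsingleton (Fin (2 ^ 0)) := inferInstanceAs (Subsingleton (Fin 1))
    refine h.of_surjective (Matrix.scalarAlgHom _ R) fun M => ⟨M 0 0, ?_⟩
    ext i j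
    rw [Subsingleton.elim i 0, Subsingleton.elim j 0]
    simp
  | succ n ih =>
    let φ := (Matrix.compAlgEquiv _ _ A R).trans
      (Matrix.reindexAlgEquiv R A (finProdFinEquiv.trans (finCongr (pow_succ' 2 n).symm)))
    rw [← add_assoc, ← add_assoc, signature_succ_succ]
    exact ih.matrix_fin_two.of_surjective φ.toAlgHom φ.surjective

end MatrixStep

theorem hasCliffordGenerators_self (R : Type*) [CommRing R] :
    HasCliffordGenerators (signature R 1 0) R := by
  refine ⟨1, fun _ => 1, fun _ => 1, by simp [signature], ⟨by simp, fun i j hij => ?_⟩, ?_⟩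
  · exact absurd (Subsingleton.elim i j) hij
  · exact Subsingleton.elim _ _

section Quaternion

open scoped Quaternion

variable {R A : Type*} [CommRing R] [Ring A] [Algebra R A] {c₁ c₃ : R}

theorem isCliffordFamily_quaternionBasis (B : QuaternionAlgebra.Basis A c₁ 0 c₃) :
    IsCliffordFamily ![c₁, c₃, -(c₁ * c₃)] ![B.i, B.j, B.k] where
  sq i := by fin_cases i <;> simp [Algebra.algebraMap_eq_smul_one]
  anticomm i j hij := by fin_cases i <;> fin_cases j <;> simp at hij ⊢

theorem hasCliffordGenerators_quaternionAlgebra :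
    HasCliffordGenerators {c₁, c₃, -(c₁ * c₃)} ℍ[R,c₁,c₃] := by
  let B : QuaternionAlgebra.Basis ℍ[R,c₁,c₃] c₁ 0 c₃ := .self R
  refine ⟨3, _, _, rfl, isCliffordFamily_quaternionBasis B, ?_⟩
  have liftHom_self : B.liftHom = AlgHom.id R _ := QuaternionAlgebra.lift.right_inv (AlgHom.id R _)
  have range_eq : Set.range ![B.i, B.j, B.k] = {B.i, B.j, B.k} := by
    simp only [Matrix.range_cons, Matrix.range_empty, Set.union_empty, Set.singleton_union]
  rw [range_eq, ← QuaternionAlgebra.Basis.range_liftHom, liftHom_self]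
  simp

theorem hasCliffordGenerators_quaternion :
    HasCliffordGenerators (signature R 0 3) (Quaternion R) := by
  have signature_eq : signature R 0 3 = {-1, -1, -(-1 * -1)} := by
    rw [neg_mul_neg, one_mul, signature, Multiset.replicate_zero, zero_add]
    rfl
  rw [signature_eq]
  exact hasCliffordGenerators_quaternionAlgebra

theorem quaternionAlgebra_isCentral [NoZeroDivisors R] [NeZero (2 : R)] (hc₁ : c₁ ≠ 0) :
    Algebra.IsCentral R ℍ[R,c₁,c₃] where
  out x hx := by
    have comm_i := Subalgebra.mem_center_iff.1 hx (QuaternionAlgebra.Basis.self R).i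
    have comm_j := Subalgebra.mem_center_iff.1 hx (QuaternionAlgebra.Basis.self R).j
    obtain ⟨hk, hj⟩ : x.imK = 0 ∧ x.imJ = 0 := by
      simpa [QuaternionAlgebra.ext_iff, neg_eq_iff_add_eq_zero, eq_neg_iff_add_eq_zero, ← two_mul,
        hc₁, two_ne_zero] using comm_i
    obtain ⟨-, hi⟩ : (c₃ = 0 ∨ x.imK = 0) ∧ x.imI = 0 := by
      simpa [QuaternionAlgebra.ext_iff, neg_eq_iff_add_eq_zero, eq_neg_iff_add_eq_zero, ← two_mul,
        two_ne_zero] using comm_j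
    exact Algebra.mem_bot.2 ⟨x.re, by ext <;> simp [hi, hj, hk]⟩

instance quaternion_isCentral [NoZeroDivisors R] [NeZero (2 : R)] :
    Algebra.IsCentral R (Quaternion R) :=
  have : Nontrivial R := ⟨2, 0, two_ne_zero⟩
  quaternionAlgebra_isCentral (neg_ne_zero.2 one_ne_zero)

end Quaternion

section UniversalProperty

variable {R A ι : Type*} [CommRing R] [Ring A] [Algebra R A] {s : ι → R}

namespace IsCliffordFamily

variable {e : ι → A}

theorem sum_smul_mul_self (h : IsCliffordFamily s e) (v : ι → R) (I : Finset ι) :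
    (∑ i ∈ I, v i • e i) * ∑ i ∈ I, v i • e i = algebraMap R A (∑ i ∈ I, s i * (v i * v i)) := by
  classical
  induction I using Finset.induction_on with
  | empty => simp
  | insert j I hj ih =>
    have anticomm_sum : v j • e j * ∑ i ∈ I, v i • e i = -((∑ i ∈ I, v i • e i) * v j • e j) := by
      rw [Finset.mul_sum, Finset.sum_mul, ← Finset.sum_neg_distrib]
      refine Finset.sum_congr rfl fun i hi => ?_
      have hji : j ≠ i := (ne_of_mem_of_not_mem hi hj).symm
      rw [smul_mul_smul_comm, smul_mul_smul_comm, h.anticomm j i hji, smul_neg, mul_comm]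
    rw [Finset.sum_insert hj, Finset.sum_insert hj, add_mul, mul_add, mul_add, anticomm_sum, ih,
      smul_mul_smul_comm, h.sq, add_assoc, neg_add_cancel_left, map_add, Algebra.smul_def,
      ← map_mul, mul_comm (s j)]

variable [Fintype ι]

theorem exists_surjective (h : IsCliffordFamily s e) (hgen : Algebra.adjoin R (Set.range e) = ⊤) :
    ∃ f : CliffordAlgebra (QuadraticMap.weightedSumSquares R s) →ₐ[R] A,
      Function.Surjective f := by
  let f := Fintype.linearCombination R e
  have sq (v : ι → R) :
      f v * f v = algebraMap R A (QuadraticMap.weightedSumSquares R s v) := by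
    simpa [f, Fintype.linearCombination_apply] using h.sum_smul_mul_self v Finset.univ
  refine ⟨CliffordAlgebra.lift _ ⟨f, sq⟩, AlgHom.range_eq_top _ |>.1 ?_⟩
  rw [CliffordAlgebra.range_lift, ← LinearMap.coe_range, Fintype.range_linearCombination,
    Algebra.adjoin_span, hgen]

end IsCliffordFamily

variable [Fintype ι] [DecidableEq ι]

theorem isCliffordFamily_ι_single :
    IsCliffordFamily s fun i =>
      CliffordAlgebra.ι (QuadraticMap.weightedSumSquares R s) (Pi.single i 1) where
  sq i := by
    rw [CliffordAlgebra.ι_sq_scalar]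
    simp [Pi.single_apply]
  anticomm i j hij := by
    refine CliffordAlgebra.ι_mul_ι_comm_of_isOrtho ?_
    rw [QuadraticMap.isOrtho_def]
    simp [Pi.single_apply, mul_add, Finset.sum_add_distrib, hij, hij.symm]

end UniversalProperty

theorem adjoin_image_ι {R M : Type*} [CommRing R] [AddCommGroup M] [Module R M]
    (Q : QuadraticForm R M) {S : Set M} (hS : Submodule.span R S = ⊤) :
    Algebra.adjoin R (CliffordAlgebra.ι Q '' S) = ⊤ := by
  rw [← Algebra.adjoin_span, ← Submodule.map_span, hS, Submodule.map_top, LinearMap.coe_range,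
    CliffordAlgebra.adjoin_range_ι]

theorem finrank_cliffordAlgebra {R M : Type*} [CommRing R] [Nontrivial R] [Invertible (2 : R)]
    [AddCommGroup M] [Module R M] [Module.Free R M] [Module.Finite R M] (Q : QuadraticForm R M) :
    Module.finrank R (CliffordAlgebra Q) = 2 ^ Module.finrank R M := by
  rw [(CliffordAlgebra.equivExterior Q).finrank_eq,
    Module.finrank_eq_card_basis (Module.finBasis R M).ExteriorAlgebra]
  simp

section Splitting

theorem isIdempotentElem_half_smul_one_add {K C : Type*} [Field K] [NeZero (2 : K)] [Ring C]
    [Algebra K C] {β : C} (hβ : β * β = 1) : IsIdempotentElem ((2⁻¹ : K) • (1 + β)) := by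
  have sq : (1 + β) * (1 + β) = (2 : K) • (1 + β) := by
    rw [add_mul, mul_add, mul_add, hβ, two_smul]
    simp only [one_mul, mul_one]
    abel
  rw [IsIdempotentElem, smul_mul_smul_comm, sq, smul_smul, inv_mul_cancel_right₀ two_ne_zero]

variable {R C A B : Type*} [CommRing R] [Ring C] [Ring A] [Ring B] [Algebra R C] [Algebra R A]
  [Algebra R B]

theorem algHom_prod_surjective {f : C →ₐ[R] A} {g : C →ₐ[R] B} (hf : Function.Surjective f)
    (hg : Function.Surjective g) {c : C} (hfc : f c = 1) (hgc : g c = 0) :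
    Function.Surjective (f.prod g) := by
  rintro ⟨a, b⟩
  obtain ⟨x, rfl⟩ := hf a
  obtain ⟨y, rfl⟩ := hg b
  exact ⟨x * c + y * (1 - c), by simp [hfc, hgc]⟩

theorem exists_surjective_apply_eq_one [NoZeroDivisors R] [FaithfulSMul R A] [Algebra.IsCentral R A]
    {σ : C ≃ₐ[R] C} {β : C} (hβ_center : β ∈ Subalgebra.center R C) (hβ : β * β = 1)
    (hσ : σ β = -β) {f : C →ₐ[R] A} (hf : Function.Surjective f) :
    ∃ g : C →ₐ[R] A, Function.Surjective g ∧ g β = 1 := by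
  have map_center : f β ∈ Subalgebra.center R A := Subalgebra.mem_center_iff.2 fun a => by
    obtain ⟨x, rfl⟩ := hf a
    rw [← map_mul, ← map_mul, Subalgebra.mem_center_iff.1 hβ_center x]
  obtain ⟨r, hr⟩ := Algebra.mem_bot.1 (Algebra.IsCentral.out map_center)
  replace hr : algebraMap R A r = f β := hr
  have r_sq : r * r = 1 := FaithfulSMul.algebraMap_injective R A <| by
    rw [map_mul, hr, ← map_mul, hβ, map_one, map_one]
  rcases mul_self_eq_one_iff.1 r_sq with rfl | rfl
  · exact ⟨f, hf, by rw [← hr, map_one]⟩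
  · exact ⟨f.comp σ, hf.comp σ.surjective, by simp [hσ, ← hr]⟩

theorem exists_algEquiv_prod_of_surjective {K C A : Type*} [Field K] [NeZero (2 : K)] [Ring C]
    [Algebra K C] [FiniteDimensional K C] [Ring A] [Algebra K A] [Nontrivial A]
    [Algebra.IsCentral K A] {σ : C ≃ₐ[K] C} {β : C} (hβ_center : β ∈ Subalgebra.center K C)
    (hβ : β * β = 1) (hσ : σ β = -β) {f : C →ₐ[K] A} (hf : Function.Surjective f)
    (hdim : Module.finrank K C = 2 * Module.finrank K A) :
    ∃ φ : C ≃ₐ[K] A × A,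
      φ ((2⁻¹ : K) • (1 + β)) = (1, 0) ∧ φ ((2⁻¹ : K) • (1 - β)) = (0, 1) := by
  obtain ⟨g, hg, hgβ⟩ := exists_surjective_apply_eq_one hβ_center hβ hσ hf
  have half_add_half : (2⁻¹ : K) • (1 + 1 : A) = 1 := by
    rw [← two_smul K, inv_smul_smul₀ two_ne_zero]
  let φ : C →ₐ[K] A × A := g.prod (g.comp σ)
  have φ_plus : φ ((2⁻¹ : K) • (1 + β)) = (1, 0) := by simp [φ, hσ, hgβ, -smul_add, half_add_half]
  have φ_minus : φ ((2⁻¹ : K) • (1 - β)) = (0, 1) := by simp [φ, hσ, hgβ, -smul_add, half_add_half]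
  have φ_surjective : Function.Surjective φ :=
    algHom_prod_surjective hg (hg.comp σ.surjective) (congrArg Prod.fst φ_plus)
      (congrArg Prod.snd φ_plus)
  have : Module.Finite K A := .of_surjective f.toLinearMap hf
  have φ_injective : Function.Injective φ :=
    (LinearMap.injective_iff_surjective_of_finrank_eq_finrank (f := φ.toLinearMap)
      (by rw [hdim, Module.finrank_prod, two_mul])).2 φ_surjective
  exact ⟨.ofBijective φ ⟨φ_injective, φ_surjective⟩, φ_plus, φ_minus⟩

end Splitting

theorem map_univ_ite_lt_eq_signature (R : Type*) [CommRing R] (p q : ℕ) :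
    Finset.univ.val.map (fun i : Fin (p + q) => if (i : ℕ) < p then (1 : R) else -1) =
      signature R p q := by
  rw [signature, ← map_univ_fin_const, ← map_univ_fin_const, ← map_univ_sumElim,
    ← Multiset.map_univ_val_equiv finSumFinEquiv, Multiset.map_map]
  refine congrArg (Multiset.map · _) (funext ?_)
  rintro (i | i) <;> simp

theorem isCliffordFamily_gen (p q : ℕ) :
    IsCliffordFamily (fun i : Fin (p + q) => if (i : ℕ) < p then (1 : ℝ) else -1) (gen p q) :=
  isCliffordFamily_ι_single

theorem adjoin_range_gen (p q : ℕ) : Algebra.adjoin ℝ (Set.range (gen p q)) = ⊤ := by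
  have gen_eq : gen p q = CliffordAlgebra.ι (Qpq p q) ∘ Pi.basisFun ℝ (Fin (p + q)) :=
    funext fun i => by simp [gen]
  rw [gen_eq, Set.range_comp, adjoin_image_ι _ (Pi.basisFun ℝ _).span_eq]

theorem finrank_Cl (p q : ℕ) : Module.finrank ℝ (Cl p q) = 2 ^ (p + q) := by
  rw [finrank_cliffordAlgebra, Module.finrank_fin_fun]

instance finiteDimensional_Cl (p q : ℕ) : FiniteDimensional ℝ (Cl p q) :=
  Module.finite_of_finrank_pos (by rw [finrank_Cl]; positivity)

section PseudoScalar

variable {p q : ℕ}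

theorem pseudoScalar_mem_center (hodd : Odd (p + q)) :
    pseudoScalar p q ∈ Subalgebra.center ℝ (Cl p q) :=
  (isCliffordFamily_gen p q).prod_mem_center (adjoin_range_gen p q) hodd

theorem pseudoScalar_mul_self (h : ((p : ℤ) - q) % 4 = 1) :
    pseudoScalar p q * pseudoScalar p q = 1 := by
  have prod_eq : ∏ i : Fin (p + q), (if (i : ℕ) < p then (1 : ℝ) else -1) = (-1) ^ q := by
    rw [Finset.prod, map_univ_ite_lt_eq_signature]
    simp [signature]
  obtain ⟨m, hm⟩ : ∃ m, p + q = 2 * m + 1 := ⟨(p + q) / 2, by lia⟩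
  have choose_eq : (p + q).choose 2 = (2 * m + 1) * m := by
    rw [hm, Nat.choose_two_right, Nat.add_sub_cancel, mul_left_comm,
      Nat.mul_div_cancel_left _ two_pos]
  have even_exponent : Even ((2 * m + 1) * m + q) := by
    have : Even (m + q) := by grind
    grind
  rw [pseudoScalar, (isCliffordFamily_gen p q).prod_mul_prod, prod_eq, choose_eq, ← pow_add,
    even_exponent.neg_one_pow, map_one]

theorem involute_pseudoScalar (hodd : Odd (p + q)) :
    CliffordAlgebra.involuteEquiv (pseudoScalar p q) = -pseudoScalar p q := by
  have gen_eq : List.ofFn (gen p q) =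
      (List.ofFn fun i => (Pi.single i 1 : Fin (p + q) → ℝ)).map (CliffordAlgebra.ι (Qpq p q)) :=
    List.map_ofFn.symm
  rw [pseudoScalar, gen_eq]
  change CliffordAlgebra.involute _ = _
  rw [CliffordAlgebra.involute_prod_map_ι]
  simp [hodd.neg_one_pow]

end PseudoScalar

theorem exists_algEquiv_matrix_prod {A : Type*} [Ring A] [Algebra ℝ A] [Algebra.IsCentral ℝ A]
    {a b p q n : ℕ} (hA : HasCliffordGenerators (signature ℝ a b) A)
    (hdim : 2 * Module.finrank ℝ A = 2 ^ (a + b)) (hadd : p + q = a + b + 2 * n)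
    (hmod : p ≡ a + n [MOD 4]) (h : ((p : ℤ) - q) % 4 = 1) :
    ∃ φ : Cl p q ≃ₐ[ℝ] Matrix (Fin (2 ^ n)) (Fin (2 ^ n)) A × Matrix (Fin (2 ^ n)) (Fin (2 ^ n)) A,
      φ ((2⁻¹ : ℝ) • (1 + pseudoScalar p q)) = (1, 0) ∧
      φ ((2⁻¹ : ℝ) • (1 - pseudoScalar p q)) = (0, 1) := by
  have hodd : Odd (p + q) := by grind
  have finrank_pos : 0 < Module.finrank ℝ A := by have := Nat.two_pow_pos (a + b); lia
  have : Nontrivial A := Module.nontrivial_of_finrank_pos finrank_pos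
  have generators :
      HasCliffordGenerators (signature ℝ p q) (Matrix (Fin (2 ^ n)) (Fin (2 ^ n)) A) :=
    (hA.matrix_two_pow n).signature_of_modEq (by lia) hmod
  rw [← map_univ_ite_lt_eq_signature, hasCliffordGenerators_map_univ_iff] at generators
  obtain ⟨e, he, hgen⟩ := generators
  obtain ⟨f, hf⟩ := he.exists_surjective hgen
  refine exists_algEquiv_prod_of_surjective (pseudoScalar_mem_center hodd)
    (pseudoScalar_mul_self h) (involute_pseudoScalar hodd) hf ?_
  rw [finrank_Cl, Module.finrank_matrix, Fintype.card_fin, hadd, pow_add, ← hdim]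
  ring

theorem two_mul_radonHurwitz_of_emod_eq_seven {i : ℤ} (hi : i % 8 = 7) :
    2 * radonHurwitz i = i - 1 := by
  simp only [radonHurwitz, hi, show (7 : ℤ).toNat = 7 from rfl, rhBase]
  lia

theorem two_mul_radonHurwitz_of_emod_eq_three {i : ℤ} (hi : i % 8 = 3) :
    2 * radonHurwitz i = i + 1 := by
  simp only [radonHurwitz, hi, show (3 : ℤ).toNat = 3 from rfl, rhBase]
  lia

theorem exists_algEquiv_matrix_real_prod {p q n : ℕ} (h : ((p : ℤ) - q) % 8 = 1)
    (hn : p + q = 1 + 2 * n) :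
    ∃ φ : Cl p q ≃ₐ[ℝ] Matrix (Fin (2 ^ n)) (Fin (2 ^ n)) ℝ × Matrix (Fin (2 ^ n)) (Fin (2 ^ n)) ℝ,
      φ ((2⁻¹ : ℝ) • (1 + pseudoScalar p q)) = (1, 0) ∧
      φ ((2⁻¹ : ℝ) • (1 - pseudoScalar p q)) = (0, 1) :=
  exists_algEquiv_matrix_prod (hasCliffordGenerators_self ℝ) (by simp) hn
    (by rw [Nat.ModEq]; lia) (by lia)

theorem exists_algEquiv_matrix_quaternion_prod {p q n : ℕ} (h : ((p : ℤ) - q) % 8 = 5)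
    (hn : p + q = 3 + 2 * n) :
    ∃ φ : Cl p q ≃ₐ[ℝ] Matrix (Fin (2 ^ n)) (Fin (2 ^ n)) (Quaternion ℝ) ×
        Matrix (Fin (2 ^ n)) (Fin (2 ^ n)) (Quaternion ℝ),
      φ ((2⁻¹ : ℝ) • (1 + pseudoScalar p q)) = (1, 0) ∧
      φ ((2⁻¹ : ℝ) • (1 - pseudoScalar p q)) = (0, 1) :=
  exists_algEquiv_matrix_prod hasCliffordGenerators_quaternion
    (by rw [Quaternion.finrank_eq_four]; rfl) (by lia) (by rw [Nat.ModEq]; lia) (by lia)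

theorem isSemisimpleRing_Cl {p q : ℕ} (h : ((p : ℤ) - q) % 4 = 1) : IsSemisimpleRing (Cl p q) := by
  obtain h8 | h8 : ((p : ℤ) - q) % 8 = 1 ∨ ((p : ℤ) - q) % 8 = 5 := by lia
  · obtain ⟨φ, -⟩ :=
      exists_algEquiv_matrix_real_prod h8 (n := (p + q - 1) / 2) (by lia)
    exact φ.symm.toRingEquiv.isSemisimpleRing
  · obtain ⟨φ, -⟩ :=
      exists_algEquiv_matrix_quaternion_prod h8 (n := (p + q - 3) / 2) (by lia)
    exact φ.symm.toRingEquiv.isSemisimpleRing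

/-- If `p - q ≡ 1 (mod 4)` then `Cl_{p,q}` is a semisimple algebra of dimension `2^{p+q}`
isomorphic to `Mat(2^{k-1}, 𝕂) ⊕ Mat(2^{k-1}, 𝕂)`, `k = q - r_{q-p}`, where `𝕂 = ℝ` if
`p - q ≡ 1 (mod 8)` and `𝕂 = ℍ` if `p - q ≡ 5 (mod 8)`; the two simple direct summands are
projected out by the central idempotents `(1 ± e₁⋯e_{p+q})/2`. -/
theorem clifford_semisimple_structure (p q : ℕ) (h : ((p : ℤ) - q) % 4 = 1) :
    IsSemisimpleRing (Cl p q) ∧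
    Module.finrank ℝ (Cl p q) = 2 ^ (p + q) ∧
    IsIdempotentElem ((2⁻¹ : ℝ) • (1 + pseudoScalar p q)) ∧
    IsIdempotentElem ((2⁻¹ : ℝ) • (1 - pseudoScalar p q)) ∧
    (2⁻¹ : ℝ) • (1 + pseudoScalar p q) ∈ Subalgebra.center ℝ (Cl p q) ∧
    (2⁻¹ : ℝ) • (1 - pseudoScalar p q) ∈ Subalgebra.center ℝ (Cl p q) ∧
    (∀ k : ℕ, (k : ℤ) = (q : ℤ) - radonHurwitz ((q : ℤ) - p) →
      (((p : ℤ) - q) % 8 = 1 →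
        ∃ φ : Cl p q ≃ₐ[ℝ]
            Matrix (Fin (2 ^ (k - 1))) (Fin (2 ^ (k - 1))) ℝ ×
            Matrix (Fin (2 ^ (k - 1))) (Fin (2 ^ (k - 1))) ℝ,
          φ ((2⁻¹ : ℝ) • (1 + pseudoScalar p q)) = (1, 0) ∧
          φ ((2⁻¹ : ℝ) • (1 - pseudoScalar p q)) = (0, 1)) ∧
      (((p : ℤ) - q) % 8 = 5 →
        ∃ φ : Cl p q ≃ₐ[ℝ]
            Matrix (Fin (2 ^ (k - 1))) (Fin (2 ^ (k - 1))) (Quaternion ℝ) ×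
            Matrix (Fin (2 ^ (k - 1))) (Fin (2 ^ (k - 1))) (Quaternion ℝ),
          φ ((2⁻¹ : ℝ) • (1 + pseudoScalar p q)) = (1, 0) ∧
          φ ((2⁻¹ : ℝ) • (1 - pseudoScalar p q)) = (0, 1))) := by
  have central := pseudoScalar_mem_center (p := p) (q := q) (by grind)
  have sq := pseudoScalar_mul_self h
  refine ⟨isSemisimpleRing_Cl h, finrank_Cl p q, isIdempotentElem_half_smul_one_add sq, ?_,
    Subalgebra.smul_mem _ (add_mem (one_mem _) central) _,
    Subalgebra.smul_mem _ (sub_mem (one_mem _) central) _, fun k hk => ⟨fun h8 => ?_, fun h8 => ?_⟩⟩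
  · rw [sub_eq_add_neg]
    exact isIdempotentElem_half_smul_one_add (by rw [neg_mul_neg, sq])
  · have := two_mul_radonHurwitz_of_emod_eq_seven (i := (q : ℤ) - p) (by lia)
    exact exists_algEquiv_matrix_real_prod h8 (by lia)
  · have := two_mul_radonHurwitz_of_emod_eq_three (i := (q : ℤ) - p) (by lia)
    exact exists_algEquiv_matrix_quaternion_prod h8 (by lia)

end
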